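/- arXiv:math/0209239 — 2 statements merged into one kernel-verified Lean document; each statement's English description precedes it below -/
import Mathlib

section
/- Let n ≥ 3 and let K be a field of characteristic p with p ∤ n and q = p^e ≡ 1 mod n, q = nk+1. In the polynomial ring K[A_1,...,A_{n-1}], the element (A_1⋯A_{n-1}·(A_1+⋯+A_{n-1}))^{(n-2)k} lies in the ideal (A_1^{(n-1)k}, ..., A_{n-1}^{(n-1)k}, (A_1+⋯+A_{n-1})^{(n-1)k}). -/
/-!
Write `m = n - 1` for the number of variables, `S` for their sum, `a = m * k` and
`q = p ^ e = a + (k + 1)`. The claim only depends on the degree of the given form: every form of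
degree `n * (n - 2) * k = m * (a - 1) - (k - m)` lies in the ideal `(X i ^ a, S ^ a)`.

Modulo the `X i ^ a` the polynomial ring is a Gorenstein algebra whose socle is spanned by the
monomial with all exponents `a - 1`, and multiplication by `S ^ a` is self-adjoint for the pairing
that it defines. So surjectivity of multiplication by `S ^ a` onto degree `m * (a - 1) - (k - m)`
follows from its injectivity in the complementary degree `k - m` (`mem_of_isHomogeneous`).

For injectivity (`eq_zero_of_mul_pow`), let `u` have degree at most `k - m ≤ k - 2` and
`u * S ^ a = ∑ X i ^ a * w i` with `deg (w i) ≤ deg u`. Multiplying by `S ^ (k + 1)` and using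
`S ^ q = ∑ X i ^ q` gives `∑ X i ^ a * (S ^ (k + 1) * w i - X i ^ (k + 1) * u) = 0`. The entries of
this syzygy have degree at most `2 * k - 1 < a`, so they vanish. Hence `X i ^ (k + 1)` divides
`S ^ (k + 1) * w i`, so it divides `w i`, whose degree is too small unless `w i = 0`; then `u = 0`.
-/

open MvPolynomial

lemma tdeg_le {σ K : Type*} [Field K] {g : MvPolynomial σ K} {c : ℕ}
    (h : ∀ d, coeff d g ≠ 0 → d.degree ≤ c) : g.totalDegree ≤ c := by
  exact Finset.sup_le fun d hd => h d (mem_support_iff.1 hd)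

lemma coeff_zero_of_tdeg {σ K : Type*} [Field K] {g : MvPolynomial σ K} {d : σ →₀ ℕ}
    (h : g.totalDegree < d.degree) : coeff d g = 0 :=
  coeff_eq_zero_of_totalDegree_lt h

/-- The powers `X i ^ a` have no nontrivial syzygies whose entries have degree less than `a`. -/
lemma eq_zero_of_sum_X_pow_mul {σ K : Type*} [Fintype σ] [Field K] (a : ℕ)
    (h : σ → MvPolynomial σ K) (hd : ∀ i, (h i).totalDegree < a)
    (hs : ∑ i, X i ^ a * h i = 0) (i : σ) : h i = 0 := by
  classical
  ext d
  rw [coeff_zero]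
  by_cases hda : d.degree < a
  · have := congrArg (coeff (Finsupp.single i a + d)) hs
    rw [coeff_sum, Finset.sum_eq_single i] at this
    · simpa [X_pow_eq_monomial, coeff_monomial_mul] using this
    · intro j _ hj
      rw [X_pow_eq_monomial, coeff_monomial_mul', if_neg]
      intro hle
      have h1 := hle j
      have h2 := Finsupp.le_degree j d
      simp [hj.symm] at h1
      omega
    · simp
  · exact coeff_zero_of_tdeg (lt_of_lt_of_le (hd i) (not_lt.1 hda))

/-- A polynomial of degree less than `2 * a` whose monomials are all divisible by some `X i ^ a`
has each monomial divisible by exactly one of these powers, so it is the sum of the multiples of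
the `X i ^ a` that it contains. -/
lemma eq_sum_X_pow_mul_divMonomial {σ K : Type*} [Fintype σ] [Field K] (a : ℕ)
    (g : MvPolynomial σ K) (hd : g.totalDegree < 2 * a)
    (hg : ∀ d : σ →₀ ℕ, (∀ i, d i < a) → coeff d g = 0) :
    g = ∑ i, X i ^ a * g.divMonomial (Finsupp.single i a) := by
  classical
  ext d
  have key : ∀ i, coeff d (X i ^ a * g.divMonomial (Finsupp.single i a)) =
      if a ≤ d i then coeff d g else 0 := by
    intro i
    rw [X_pow_eq_monomial, coeff_monomial_mul']
    simp only [Finsupp.single_le_iff]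
    split_ifs with h
    · rw [coeff_divMonomial, one_mul, add_tsub_cancel_of_le (Finsupp.single_le_iff.2 h)]
    · rfl
  simp only [coeff_sum, key]
  by_cases h0 : coeff d g = 0
  · simp [h0]
  have hex : ∃ i, a ≤ d i := by
    by_contra! hc
    exact h0 (hg d hc)
  obtain ⟨i, hi⟩ := hex
  rw [Finset.sum_eq_single i, if_pos hi]
  · intro j _ hj
    rw [if_neg]
    intro hj'
    apply h0
    apply coeff_zero_of_tdeg
    have : d i + d j ≤ d.degree := by
      rw [Finsupp.degree_eq_sum, ← Finset.sum_pair hj.symm]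
      exact Finset.sum_le_sum_of_subset (Finset.subset_univ _)
    omega
  · simp

lemma not_X_dvd_sum_X {σ K : Type*} [Fintype σ] [Nontrivial σ] [Field K] (i : σ) :
    ¬ (X i : MvPolynomial σ K) ∣ ∑ j, X j := by
  classical
  rintro ⟨g, hg⟩
  obtain ⟨j, hj⟩ := exists_ne i
  have := congrArg (eval fun l => if l = j then (1 : K) else 0) hg
  simp [hj.symm] at this

lemma totalDegree_sum_X_le {σ K : Type*} [Fintype σ] [Field K] :
    (∑ j, X j : MvPolynomial σ K).totalDegree ≤ 1 :=
  totalDegree_finsetSum_le fun _ _ => by simp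

/-- Multiplication by the `a`-th power of the sum of the variables is injective in small degrees
modulo the ideal generated by the `X i ^ a`. -/
lemma eq_zero_of_mul_pow {σ K : Type*} [Fintype σ] [Nontrivial σ] [Field K] (p e k a : ℕ)
    [Fact p.Prime] [CharP K p] (hq : p ^ e = a + (k + 1)) (ha : 2 * k ≤ a)
    (u : MvPolynomial σ K) (hu : u.totalDegree + 2 ≤ k)
    (h : ∀ d : σ →₀ ℕ, (∀ i, d i < a) → coeff d (u * (∑ j, X j) ^ a) = 0) : u = 0 := by
  classical
  set S : MvPolynomial σ K := ∑ j, X j with hS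
  have hSd : S.totalDegree ≤ 1 := totalDegree_sum_X_le
  have hpow : ∀ r, (S ^ r).totalDegree ≤ r := fun r =>
    (totalDegree_pow _ _).trans (by nlinarith)
  have hg : (u * S ^ a).totalDegree ≤ u.totalDegree + a :=
    (totalDegree_mul _ _).trans (Nat.add_le_add_left (hpow a) _)
  set w : σ → MvPolynomial σ K := fun i => (u * S ^ a).divMonomial (Finsupp.single i a) with hw
  have hdec : u * S ^ a = ∑ i, X i ^ a * w i :=
    eq_sum_X_pow_mul_divMonomial a _ (by omega) h
  have hwd : ∀ i, (w i).totalDegree ≤ u.totalDegree := by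
    intro i
    apply tdeg_le
    intro d hd
    by_contra! hlt
    apply hd
    rw [hw, coeff_divMonomial]
    apply coeff_zero_of_tdeg
    rw [map_add, Finsupp.degree_single]
    omega
  -- The Frobenius identity gives a syzygy of the `X i ^ a` with entries of degree less than `a`.
  have hsyz : ∑ i, X i ^ a * (S ^ (k + 1) * w i - X i ^ (k + 1) * u) = 0 := by
    have hF : S ^ (a + (k + 1)) = ∑ i, X i ^ (a + (k + 1)) := by
      rw [← hq, hS, sum_pow_char_pow]
    calc _ = S ^ (k + 1) * (∑ i, X i ^ a * w i) - (∑ i, X i ^ (a + (k + 1))) * u := by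
          rw [Finset.mul_sum, Finset.sum_mul, ← Finset.sum_sub_distrib]
          exact Finset.sum_congr rfl fun i _ => by ring
      _ = 0 := by rw [← hdec, ← hF]; ring
  obtain ⟨i, -⟩ := exists_pair_ne σ
  have hi := eq_zero_of_sum_X_pow_mul a _ (fun i => ?_) hsyz i
  · rw [sub_eq_zero] at hi
    have hdvd : (X i : MvPolynomial σ K) ^ (k + 1) ∣ w i := by
      refine (X_prime (i := i)).pow_dvd_of_dvd_mul_left (k + 1) (a := S ^ (k + 1)) ?_ ⟨u, hi⟩
      intro hdv
      exact not_X_dvd_sum_X i ((X_prime (i := i)).dvd_of_dvd_pow hdv)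
    have hw0 : w i = 0 := by
      obtain ⟨v, hv⟩ := hdvd
      by_contra hne
      have hv0 : v ≠ 0 := by
        rintro rfl
        exact hne (by rw [hv, mul_zero])
      have := hwd i
      rw [hv, totalDegree_mul_of_isDomain (pow_ne_zero _ (X_ne_zero i)) hv0,
        totalDegree_X_pow] at this
      omega
    rw [hw0, mul_zero, eq_comm] at hi
    exact (mul_eq_zero.1 hi).resolve_left (pow_ne_zero _ (X_ne_zero i))
  · have h1 : (S ^ (k + 1) * w i).totalDegree ≤ (k + 1) + u.totalDegree :=
      (totalDegree_mul _ _).trans (Nat.add_le_add (hpow _) (hwd i))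
    have h2 : ((X i : MvPolynomial σ K) ^ (k + 1) * u).totalDegree ≤ (k + 1) + u.totalDegree :=
      (totalDegree_mul _ _).trans (by rw [totalDegree_X_pow])
    have := totalDegree_sub (S ^ (k + 1) * w i) (X i ^ (k + 1) * u)
    have := max_le h1 h2
    omega

/-- A form of degree `D`, with `D` at distance at most `k - 2` below the socle degree
`card σ * (a - 1)`, lies in the ideal generated by the `X i ^ a` and the `a`-th power of the sum of
the variables. This is dual to `eq_zero_of_mul_pow`. -/
lemma mem_of_isHomogeneous {σ K : Type*} [Fintype σ] [Nontrivial σ] [Field K] (p e k a D : ℕ)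
    [Fact p.Prime] [CharP K p] (hq : p ^ e = a + (k + 1)) (ha : 2 * k ≤ a)
    (hD : Fintype.card σ * (a - 1) + 2 ≤ D + k)
    (f : MvPolynomial σ K) (hf : f.IsHomogeneous D) :
    f ∈ Ideal.span ((Set.range fun i : σ => (X i : MvPolynomial σ K) ^ a) ∪
        {(∑ i, X i) ^ a}) := by
  classical
  set S : MvPolynomial σ K := ∑ j, X j with hS
  set I := Ideal.span ((Set.range fun i : σ => (X i : MvPolynomial σ K) ^ a) ∪ {S ^ a}) with hI
  by_contra hfI
  obtain ⟨ψ, hψf, hψI⟩ := Submodule.exists_le_ker_of_notMem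
    (p := I.restrictScalars K) (v := f) hfI
  replace hψI : ∀ g ∈ I, ψ g = 0 := fun g hg => hψI hg
  have hmon : ∀ (d : σ →₀ ℕ) (i : σ), a ≤ d i → ψ (monomial d 1) = 0 := by
    intro d i hi
    apply hψI
    refine I.mem_of_dvd ?_ (Ideal.subset_span (Or.inl ⟨i, rfl⟩))
    simp only [X_pow_eq_monomial]
    exact monomial_dvd_monomial.2 ⟨Or.inr (Finsupp.single_le_iff.2 hi), dvd_rfl⟩
  have hexp : ∀ g : MvPolynomial σ K, ψ g = ∑ d ∈ g.support, coeff d g * ψ (monomial d 1) := by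
    intro g
    conv_lhs => rw [g.as_sum, map_sum]
    refine Finset.sum_congr rfl fun d _ => ?_
    rw [← mul_one (coeff d g), ← smul_eq_mul, ← smul_monomial, map_smul, smul_eq_mul, smul_eq_mul,
      mul_one]
  -- `t` is the exponent of the socle monomial; `u` is the form representing `ψ` in degree `D`.
  set t : σ →₀ ℕ := Finsupp.equivFunOnFinite.symm fun _ => a - 1 with ht
  have hti : ∀ i, t i = a - 1 := fun i => rfl
  have htdeg : t.degree = Fintype.card σ * (a - 1) := by
    simp [Finsupp.degree_eq_sum, hti]
  have hle : ∀ d : σ →₀ ℕ, (∀ i, d i < a) → d ≤ t := by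
    intro d hd i
    have := hd i
    rw [hti]
    omega
  set s : Finset (σ →₀ ℕ) := (Finset.Iic t).filter fun d => d.degree + D = t.degree with hs
  set u : MvPolynomial σ K := ∑ d ∈ s, monomial d (ψ (monomial (t - d) 1)) with hu
  have hcu : ∀ d, coeff d u =
      if d ≤ t ∧ d.degree + D = t.degree then ψ (monomial (t - d) 1) else 0 := by
    intro d
    rw [hu, coeff_sum]
    simp only [coeff_monomial, Finset.sum_ite_eq', hs, Finset.mem_filter, Finset.mem_Iic]
  have hSa : (S ^ a).IsHomogeneous a := by
    simpa using (IsHomogeneous.sum _ _ 1 fun i _ => isHomogeneous_X K i).pow a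
  -- For `d ≤ t` of the relevant degree, the coefficient at `d` is the value of `ψ` at
  -- `monomial (t - d) 1 * S ^ a`.
  have hcoef : ∀ d : σ →₀ ℕ, (∀ i, d i < a) → coeff d (u * S ^ a) = 0 := by
    intro d hd
    have hdt := hle d hd
    rw [coeff_mul]
    by_cases hdeg : d.degree + D = t.degree + a
    swap
    · refine Finset.sum_eq_zero fun x hx => ?_
      rw [Finset.HasAntidiagonal.mem_antidiagonal] at hx
      by_contra hne
      obtain ⟨h1, h2⟩ := mul_ne_zero_iff.1 hne
      have h2' : x.2.degree = a := by
        by_contra hc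
        exact h2 (hSa.coeff_eq_zero hc)
      rw [hcu] at h1
      have h1' := (ite_ne_right_iff.1 h1).1.2
      have := congrArg Finsupp.degree hx
      rw [map_add] at this
      omega
    have h0 : ψ (monomial (t - d) 1 * S ^ a) = 0 :=
      hψI _ (I.mul_mem_left _ (Ideal.subset_span (Or.inr rfl)))
    have h1 : ψ (monomial (t - d) 1 * S ^ a) =
        ∑ y ∈ (S ^ a).support, coeff y (S ^ a) * ψ (monomial (t - d + y) 1) := by
      conv_lhs => rw [(S ^ a).as_sum, Finset.mul_sum, map_sum]
      refine Finset.sum_congr rfl fun y _ => ?_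
      rw [monomial_mul, one_mul, ← mul_one (coeff y (S ^ a)), ← smul_eq_mul, ← smul_monomial,
        map_smul, smul_eq_mul, smul_eq_mul, mul_one]
    rw [← h0, h1]
    symm
    have h2 : ∀ y ∈ (S ^ a).support, y ∉ Finset.Iic d →
        coeff y (S ^ a) * ψ (monomial (t - d + y) 1) = 0 := by
      intro y _ hy
      rw [Finset.mem_Iic, Finsupp.le_def] at hy
      push Not at hy
      obtain ⟨i, hi⟩ := hy
      rw [hmon _ i, mul_zero]
      have := hd i
      rw [Finsupp.add_apply, Finsupp.tsub_apply, hti]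
      omega
    rw [← Finset.sum_filter_of_ne (p := fun y => y ∈ Finset.Iic d)
      (fun y hy hne => by by_contra hc; exact hne (h2 y hy hc))]
    have h3 : ∀ x ∈ Finset.HasAntidiagonal.antidiagonal d, coeff x.1 u * coeff x.2 (S ^ a) =
        coeff x.2 (S ^ a) * ψ (monomial (t - d + x.2) 1) := by
      intro x hx
      rw [Finset.HasAntidiagonal.mem_antidiagonal] at hx
      by_cases hx2 : coeff x.2 (S ^ a) = 0
      · simp [hx2]
      have h2' : x.2.degree = a := by
        by_contra hc
        exact hx2 (hSa.coeff_eq_zero hc)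
      have := congrArg Finsupp.degree hx
      rw [map_add] at this
      have hE : t - x.1 = t - d + x.2 := by
        ext i
        have e1 := DFunLike.congr_fun hx i
        have e2 := hdt i
        simp only [Finsupp.add_apply, Finsupp.tsub_apply] at e1 ⊢
        omega
      rw [hcu, if_pos ⟨(le_self_add.trans hx.le).trans hdt, by omega⟩, mul_comm, hE]
    rw [Finset.sum_congr rfl h3]
    have h4 := Finset.sum_filter_ne_zero
      (s := (Finset.HasAntidiagonal.antidiagonal d)) (f := fun x : (σ →₀ ℕ) × (σ →₀ ℕ) =>
        coeff x.2 (S ^ a) * ψ (monomial (t - d + x.2) 1))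
    rw [← h4]
    refine Finset.sum_bij_ne_zero (fun y _ _ => (d - y, y)) ?_ ?_ ?_ ?_
    · intro y hy hne
      rw [Finset.mem_filter, Finset.mem_Iic] at hy
      rw [Finset.mem_filter, Finset.HasAntidiagonal.mem_antidiagonal]
      exact ⟨tsub_add_cancel_of_le hy.2, hne⟩
    · intro y _ _ z _ _ hyz
      exact (Prod.ext_iff.1 hyz).2
    · intro x hx hne
      rw [Finset.mem_filter, Finset.HasAntidiagonal.mem_antidiagonal] at hx
      refine ⟨x.2, ?_, hne, ?_⟩
      · rw [Finset.mem_filter, Finset.mem_Iic, mem_support_iff]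
        exact ⟨left_ne_zero_of_mul hne, le_add_self.trans hx.1.le⟩
      · rw [← hx.1, add_tsub_cancel_right]
    · intro y _ _
      rfl
  have hu0 : u = 0 := by
    by_contra hne
    have hsup : ∃ d, d ∈ u.support := by
      simpa [Finset.Nonempty] using (support_nonempty.2 hne)
    have hdd : ∀ d, coeff d u ≠ 0 → d.degree + D = t.degree := fun d hd => by
      rw [hcu] at hd
      exact (ite_ne_right_iff.1 hd).1.2
    obtain ⟨d, hd⟩ := hsup
    have h1 := hdd d (mem_support_iff.1 hd)
    have h2 : u.totalDegree ≤ t.degree - D := tdeg_le fun d hd => by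
      have := hdd d hd
      omega
    exact hne (eq_zero_of_mul_pow p e k a hq ha u (by omega) hcoef)
  apply hψf
  rw [hexp]
  refine Finset.sum_eq_zero fun d hd => ?_
  by_cases hda : ∀ i, d i < a
  · have hdt := hle d hda
    have hdD : d.degree = D := by
      by_contra hc
      exact mem_support_iff.1 hd (hf.coeff_eq_zero hc)
    have h1 := hcu (t - d)
    rw [hu0, coeff_zero, if_pos, tsub_tsub_cancel_of_le hdt] at h1
    · rw [← h1, mul_zero]
    · refine ⟨tsub_le_self, ?_⟩
      rw [← hdD, ← map_add, tsub_add_cancel_of_le hdt]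
  · push Not at hda
    obtain ⟨i, hi⟩ := hda
    rw [hmon d i hi, mul_zero]

theorem stmt_14 (K : Type*) [Field K] (p n e k : ℕ) [Fact p.Prime] [CharP K p]
    (hn : 3 ≤ n) (hpn : ¬ p ∣ n) (he : 1 ≤ e) (hk : 1 ≤ k) (hq : p ^ e = n * k + 1) :
    ((∏ i : Fin (n - 1), X i) * (∑ i : Fin (n - 1), X i)) ^ ((n - 2) * k) ∈
      Ideal.span ((Set.range fun i : Fin (n - 1) =>
          (X i : MvPolynomial (Fin (n - 1)) K) ^ ((n - 1) * k)) ∪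
        {(∑ i : Fin (n - 1), X i) ^ ((n - 1) * k)}) := by
  have : Nontrivial (Fin (n - 1)) := Fin.nontrivial_iff_two_le.2 (by omega)
  obtain ⟨l, hl⟩ : ∃ l, n = l + 3 := ⟨n - 3, by omega⟩
  have h1 : n - 1 = l + 2 := by omega
  have h2 : n - 2 = l + 1 := by omega
  have hom : (((∏ i : Fin (n - 1), X i) * (∑ i : Fin (n - 1), X i) :
      MvPolynomial (Fin (n - 1)) K) ^ ((n - 2) * k)).IsHomogeneous (n * ((n - 2) * k)) := by
    have hP := IsHomogeneous.prod (R := K) Finset.univ (fun i : Fin (n - 1) => X i) (fun _ => 1)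
      fun i _ => isHomogeneous_X K i
    have hS := IsHomogeneous.sum (R := K) Finset.univ (fun i : Fin (n - 1) => X i) 1
      fun i _ => isHomogeneous_X K i
    have := (hP.mul hS).pow ((n - 2) * k)
    convert this using 2
    simp
    omega
  refine mem_of_isHomogeneous p e k _ _ ?_ ?_ ?_ _ hom
  · rw [hq, h1, hl]
    ring
  · rw [h1]
    nlinarith
  · obtain ⟨b, hb⟩ : ∃ b, (n - 1) * k = b + 1 :=
      Nat.exists_eq_succ_of_ne_zero (Nat.mul_pos (by omega) hk).ne'
    rw [Fintype.card_fin, hb, h2, Nat.add_sub_cancel, h1, hl]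
    rw [h1] at hb
    nlinarith
end

section
/- Let R = K[X,Y,Z]/(X^3+Y^3+Z^3) over a field K of prime characteristic p ≠ 3, let S = K[U,V], and let T = R # S be the Segre product. Then the elements xv−yu, xu, yv form a system of parameters for T, and the relation (zu)(zv)(xv−yu) = (zv)^2(xu) − (zu)^2(yv) holds in T; consequently (zu)(zv) ∈ (xu, yv) :_T (xv−yu). -/
/-! Write `d = xv - yu`, `a = xu`, `b = yv`. The relation and the colon membership are direct
computations. Everything else rests on the identities `(xv)(yu) = ab` and
`(zu)³ = -(xu)³ - (yu)³`, `(zv)³ = -(xv)³ - (yv)³`.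

* They show that `xv` is a root of `t² - dt - ab`, that `yu = xv - d`, and that `zu`, `zv` are
  roots of monic cubics; hence `T` is integral over `K[a, b, d]`. Modulo `(d, a, b)` they
  show that all six generators are nilpotent.
* The elements `a, b, d` are algebraically independent: over an algebraic closure `L` of
  `K(P, Q, D)` there is a point of `Spec (R ⊗ S)` at which they take the values `P, Q, D`
  (`exists_point`), so a polynomial relation between `a, b, d` would be one between `P, Q, D`.

An injective integral extension preserves Krull dimension (lying over, going up and
incomparability), so `dim T = dim K[P, Q, D] = 3`.
-/

open MvPolynomial TensorProduct

set_option maxHeartbeats 1000000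
set_option synthInstance.maxHeartbeats 400000

/-- Krull dimension is preserved by injective integral extensions. -/
lemma ringKrullDim_eq_of_isIntegral_of_injective {A B : Type*} [CommRing A] [CommRing B]
    (f : A →+* B) (hf : f.IsIntegral) (hinj : Function.Injective f) :
    ringKrullDim B = ringKrullDim A := by
  algebraize [f]
  apply le_antisymm
  · refine Order.krullDim_le_of_strictMono (PrimeSpectrum.comap (algebraMap A B)) ?_
    intro I J hIJ
    exact Ideal.IsIntegral.comap_lt_comap (R := A) (I := I.asIdeal) (J := J.asIdeal) hIJ
  · refine iSup_le fun l ↦ ?_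
    obtain ⟨P, hP⟩ := hf.comap_surjective hinj l.head
    have : P.asIdeal.LiesOver l.head.asIdeal := ⟨by rw [← hP]; rfl⟩
    obtain ⟨M, hM, -⟩ := Ideal.exists_ltSeries_of_hasGoingUp l P.asIdeal
    rw [← hM]
    exact Order.LTSeries.length_le_krullDim M

/-- Every `K`-algebra that is a domain embeds in an algebraically closed extension of `K`. -/
lemma exists_algHom_isAlgClosed_injective.{u} (K : Type*) (A : Type u) [Field K] [CommRing A]
    [IsDomain A] [Algebra K A] :
    ∃ (L : Type u) (_ : Field L) (_ : IsAlgClosed L) (_ : Algebra K L) (ι : A →ₐ[K] L),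
      Function.Injective ι := by
  let f : A →+* AlgebraicClosure (FractionRing A) :=
    (algebraMap (FractionRing A) (AlgebraicClosure (FractionRing A))).comp
      (algebraMap A (FractionRing A))
  let : Algebra K (AlgebraicClosure (FractionRing A)) := (f.comp (algebraMap K A)).toAlgebra
  exact ⟨AlgebraicClosure (FractionRing A), inferInstance, inferInstance, inferInstance,
    { f with commutes' := fun _ ↦ rfl },
    (algebraMap (FractionRing A) _).injective.comp (IsFractionRing.injective A _)⟩

/-- Over an algebraically closed field, the affine cone over the Fermat cubic times the plane has
a point `((x, y, z), (u, v))` at which `xu`, `yv`, `xv - yu` take prescribed values, provided the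
value of `yv` is nonzero. -/
lemma exists_point {L : Type*} [Field L] [IsAlgClosed L] (a b d : L) (hb : b ≠ 0) :
    ∃ x y z u v : L, x ^ 3 + y ^ 3 + z ^ 3 = 0 ∧ x * u = a ∧ y * v = b ∧
      x * v - y * u = d := by
  -- With `y = 1` and `v = b`, the unknown `x` satisfies `b x² - d x - a = 0`.
  obtain ⟨x, hx⟩ := IsAlgClosed.exists_root
    (Polynomial.C b * Polynomial.X ^ 2 + Polynomial.C (-d) * Polynomial.X + Polynomial.C (-a))
    (by rw [Polynomial.degree_quadratic hb]; decide)
  obtain ⟨z, hz⟩ := IsAlgClosed.exists_pow_nat_eq (-(x ^ 3 + 1)) (n := 3) (by norm_num)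
  simp only [Polynomial.IsRoot.def, Polynomial.eval_add, Polynomial.eval_mul, Polynomial.eval_C,
    Polynomial.eval_pow, Polynomial.eval_X] at hx
  exact ⟨x, 1, z, x * b - d, b, by linear_combination hz, by linear_combination hx, one_mul b,
    by ring⟩

/-- An element whose cube is integral over the source of `f` is integral. -/
lemma isIntegralElem_of_cube {A B : Type*} [CommRing A] [CommRing B] (f : A →+* B) {t : B}
    (h : f.IsIntegralElem (t ^ 3)) : f.IsIntegralElem t := by
  algebraize [f]
  exact IsIntegral.of_pow (R := A) (n := 3) (by norm_num) h

/-- A ring generated by the six entries of a `2 × 3` array is integral over the `K`-subalgebra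
generated by `xu`, `yv`, `xv - yu` when `(xv)(yu) = (xu)(yv)` and each row satisfies
the Fermat cubic. -/
lemma isIntegral_aeval_params {K C : Type*} [Field K] [CommRing C] [Algebra K C]
    {XU XV YU YV ZU ZV : C} (hgen : Algebra.adjoin K {XU, XV, YU, YV, ZU, ZV} = ⊤)
    (hU : XU ^ 3 + YU ^ 3 + ZU ^ 3 = 0) (hV : XV ^ 3 + YV ^ 3 + ZV ^ 3 = 0)
    (hXY : XV * YU = XU * YV) :
    (aeval ![XU, YV, XV - YU] : MvPolynomial (Fin 3) K →ₐ[K] C).toRingHom.IsIntegral := by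
  set φ : MvPolynomial (Fin 3) K →ₐ[K] C := aeval ![XU, YV, XV - YU] with hφ
  have φ0 : φ.toRingHom (X 0) = XU := by simp [φ]
  have φ1 : φ.toRingHom (X 1) = YV := by simp [φ]
  have φ2 : φ.toRingHom (X 2) = XV - YU := by simp [φ]
  have iXU : φ.toRingHom.IsIntegralElem XU := by
    rw [← φ0]; exact φ.toRingHom.isIntegralElem_map
  have iYV : φ.toRingHom.IsIntegralElem YV := by
    rw [← φ1]; exact φ.toRingHom.isIntegralElem_map
  have iD : φ.toRingHom.IsIntegralElem (XV - YU) := by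
    rw [← φ2]; exact φ.toRingHom.isIntegralElem_map
  have iXV : φ.toRingHom.IsIntegralElem XV := by
    refine ⟨Polynomial.X ^ 2 - Polynomial.C (X 2) * Polynomial.X - Polynomial.C (X 0 * X 1),
      by monicity!, ?_⟩
    simp only [Polynomial.eval₂_sub, Polynomial.eval₂_mul, Polynomial.eval₂_pow,
      Polynomial.eval₂_X, Polynomial.eval₂_C, map_mul, φ0, φ1, φ2]
    linear_combination hXY
  have iYU : φ.toRingHom.IsIntegralElem YU := by
    have := iXV.sub _ iD
    rwa [sub_sub_cancel] at this
  have cube (a b c : C) (h : a ^ 3 + b ^ 3 + c ^ 3 = 0) (ha : φ.toRingHom.IsIntegralElem a)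
      (hb : φ.toRingHom.IsIntegralElem b) : φ.toRingHom.IsIntegralElem c := by
    apply isIntegralElem_of_cube
    have e : c ^ 3 = -(a * a * a + b * b * b) := by linear_combination h
    rw [e]
    exact (((ha.mul _ ha).mul _ ha).add _ ((hb.mul _ hb).mul _ hb)).neg _
  have iZU := cube _ _ _ hU iXU iYU
  have iZV := cube _ _ _ hV iXV iYV
  intro t
  have ht : t ∈ Algebra.adjoin K {XU, XV, YU, YV, ZU, ZV} := hgen ▸ Algebra.mem_top
  induction ht using Algebra.adjoin_induction with
  | mem w hw => rcases hw with rfl | rfl | rfl | rfl | rfl | rfl <;> assumption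
  | algebraMap r =>
    rw [← φ.commutes r]
    exact φ.toRingHom.isIntegralElem_map
  | add a b ha hb iha ihb => exact iha.add _ ihb
  | mul a b ha hb iha ihb => exact iha.mul _ ihb

/-- Under the same relations, all six entries are nilpotent modulo the three parameters. -/
lemma span_entries_le_radical {C : Type*} [CommRing C] {XU XV YU YV ZU ZV : C}
    (hU : XU ^ 3 + YU ^ 3 + ZU ^ 3 = 0) (hV : XV ^ 3 + YV ^ 3 + ZV ^ 3 = 0)
    (hXY : XV * YU = XU * YV) :
    Ideal.span {XU, XV, YU, YV, ZU, ZV} ≤ (Ideal.span {XV - YU, XU, YV}).radical := by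
  set I : Ideal C := Ideal.span {XV - YU, XU, YV}
  have mD : XV - YU ∈ I := Ideal.subset_span (by simp)
  have mXU : XU ∈ I := Ideal.subset_span (by simp)
  have mYV : YV ∈ I := Ideal.subset_span (by simp)
  have rXU := Ideal.le_radical mXU
  have rYV := Ideal.le_radical mYV
  have rXV : XV ∈ I.radical := by
    refine ⟨2, ?_⟩
    have e : XV ^ 2 = XV * (XV - YU) + YV * XU := by linear_combination hXY
    rw [e]
    exact I.add_mem (I.mul_mem_left _ mD) (I.mul_mem_left _ mXU)
  have rYU : YU ∈ I.radical := by
    have rD : XV - YU ∈ I.radical := Ideal.le_radical mD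
    have := sub_mem rXV rD
    rwa [sub_sub_cancel] at this
  have cube (a b c : C) (h : a ^ 3 + b ^ 3 + c ^ 3 = 0) (ha : a ∈ I.radical)
      (hb : b ∈ I.radical) : c ∈ I.radical := by
    rw [← Ideal.radical_idem]
    refine ⟨3, ?_⟩
    have e : c ^ 3 = (-a ^ 2) * a + (-b ^ 2) * b := by linear_combination h
    rw [e]
    exact I.radical.add_mem (I.radical.mul_mem_left _ ha) (I.radical.mul_mem_left _ hb)
  have rZU := cube _ _ _ hU rXU rYU
  have rZV := cube _ _ _ hV rXV rYV
  rw [Ideal.span_le]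
  rintro t (rfl | rfl | rfl | rfl | rfl | rfl) <;> assumption

lemma mul_mem_colon_of_rel {C : Type*} [CommRing C] {a b d e f g : C}
    (h : e * d = f * a - g * b) :
    e ∈ Submodule.colon (R := C) (M := C) (Ideal.span {a, b}) (Ideal.span {d}) := by
  rw [Ideal.mem_colon_span_singleton, h]
  exact sub_mem (Ideal.mul_mem_left _ _ (Ideal.subset_span (by simp)))
    (Ideal.mul_mem_left _ _ (Ideal.subset_span (by simp)))

/-- Segre product statement: `R = K[X,Y,Z]/(X³+Y³+Z³)`, `S = K[U,V]`; since both are generated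
in degree one, the Segre product `T = R # S` is the `K`-subalgebra of `R ⊗[K] S` generated by
the six products `xu, xv, yu, yv, zu, zv` of degree-one elements.  The elements
`xv - yu, xu, yv` form a system of parameters for `T` (i.e. `T` has Krull dimension 3 and the
irrelevant maximal ideal is contained in the radical of the ideal they generate), the relation
`(zu)(zv)(xv - yu) = (zv)²(xu) - (zu)²(yv)` holds, and hence
`(zu)(zv) ∈ (xu, yv) :_T (xv - yu)`. -/
theorem stmt_18 (K : Type*) [Field K] (p : ℕ) [Fact p.Prime] [CharP K p] (hp3 : p ≠ 3)
    (R : Type*) [CommRing R] [Algebra K R]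
    (g : MvPolynomial (Fin 3) K →ₐ[K] R) (hg : Function.Surjective g)
    (hker : RingHom.ker g = Ideal.span {(X 0 ^ 3 + X 1 ^ 3 + X 2 ^ 3 : MvPolynomial (Fin 3) K)})
    (x y z : R) (hx : x = g (X 0)) (hy : y = g (X 1)) (hz : z = g (X 2))
    (u v : MvPolynomial (Fin 2) K) (hu : u = X 0) (hv : v = X 1)
    (T : Subalgebra K (R ⊗[K] MvPolynomial (Fin 2) K))
    (hT : T = Algebra.adjoin K {x ⊗ₜ[K] u, x ⊗ₜ[K] v, y ⊗ₜ[K] u, y ⊗ₜ[K] v,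
        z ⊗ₜ[K] u, z ⊗ₜ[K] v})
    (XU XV YU YV ZU ZV : T)
    (hXU : (XU : R ⊗[K] MvPolynomial (Fin 2) K) = x ⊗ₜ[K] u)
    (hXV : (XV : R ⊗[K] MvPolynomial (Fin 2) K) = x ⊗ₜ[K] v)
    (hYU : (YU : R ⊗[K] MvPolynomial (Fin 2) K) = y ⊗ₜ[K] u)
    (hYV : (YV : R ⊗[K] MvPolynomial (Fin 2) K) = y ⊗ₜ[K] v)
    (hZU : (ZU : R ⊗[K] MvPolynomial (Fin 2) K) = z ⊗ₜ[K] u)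
    (hZV : (ZV : R ⊗[K] MvPolynomial (Fin 2) K) = z ⊗ₜ[K] v) :
    -- `xv - yu, xu, yv` are a system of parameters for `T`
    (ringKrullDim T = 3 ∧
      (Ideal.span {XU, XV, YU, YV, ZU, ZV} : Ideal T) ≤ (Ideal.span {XV - YU, XU, YV} : Ideal T).radical) ∧
      -- the relation on the parameters
      ZU * ZV * (XV - YU) = ZV ^ 2 * XU - ZU ^ 2 * YV ∧
      -- consequently the colon ideal membership
      ZU * ZV ∈ Submodule.colon (R := T) (M := T) (Ideal.span {XU, YV}) (Ideal.span {XV - YU}) := by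
  subst hu hv
  have hF : x ^ 3 + y ^ 3 + z ^ 3 = 0 := by
    have : (X 0 ^ 3 + X 1 ^ 3 + X 2 ^ 3 : MvPolynomial (Fin 3) K) ∈ RingHom.ker g := by
      rw [hker]; exact Ideal.subset_span rfl
    simpa [RingHom.mem_ker, ← hx, ← hy, ← hz] using this
  have hF' (w : MvPolynomial (Fin 2) K) :
      (x ⊗ₜ[K] w) ^ 3 + (y ⊗ₜ[K] w) ^ 3 + (z ⊗ₜ[K] w) ^ 3 = 0 := by
    simp only [Algebra.TensorProduct.tmul_pow, ← TensorProduct.add_tmul, hF,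
      TensorProduct.zero_tmul]
  have hU : XU ^ 3 + YU ^ 3 + ZU ^ 3 = 0 := by
    apply Subtype.ext
    push_cast
    rw [hXU, hYU, hZU, hF']
  have hV : XV ^ 3 + YV ^ 3 + ZV ^ 3 = 0 := by
    apply Subtype.ext
    push_cast
    rw [hXV, hYV, hZV, hF']
  have hXY : XV * YU = XU * YV := by
    apply Subtype.ext
    push_cast
    rw [hXU, hXV, hYU, hYV]
    simp only [Algebra.TensorProduct.tmul_mul_tmul, mul_comm (X 1 : MvPolynomial (Fin 2) K)]
  have hXZ : XV * ZU = XU * ZV := by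
    apply Subtype.ext
    push_cast
    rw [hXU, hXV, hZU, hZV]
    simp only [Algebra.TensorProduct.tmul_mul_tmul, mul_comm (X 1 : MvPolynomial (Fin 2) K)]
  have hYZ : YV * ZU = YU * ZV := by
    apply Subtype.ext
    push_cast
    rw [hYU, hYV, hZU, hZV]
    simp only [Algebra.TensorProduct.tmul_mul_tmul, mul_comm (X 1 : MvPolynomial (Fin 2) K)]
  have hrel : ZU * ZV * (XV - YU) = ZV ^ 2 * XU - ZU ^ 2 * YV := by
    linear_combination ZV * hXZ + ZU * hYZ
  refine ⟨⟨?_, ?_⟩, hrel, ?_⟩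
  · let φ : MvPolynomial (Fin 3) K →ₐ[K] T := aeval ![XU, YV, XV - YU]
    have φ0 : φ (X 0) = XU := by simp [φ]
    have φ1 : φ (X 1) = YV := by simp [φ]
    have φ2 : φ (X 2) = XV - YU := by simp [φ]
    have hgen : Algebra.adjoin K {XU, XV, YU, YV, ZU, ZV} = (⊤ : Subalgebra K T) := by
      apply Subalgebra.map_injective (f := T.val) Subtype.val_injective
      rw [AlgHom.map_adjoin, Algebra.map_top, Subalgebra.range_val]
      simp only [Set.image_insert_eq, Set.image_singleton, Subalgebra.coe_val, hXU, hXV, hYU, hYV,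
        hZU, hZV]
      exact hT.symm
    have hint := isIntegral_aeval_params (C := T) hgen hU hV hXY
    have hinj : Function.Injective φ := by
      obtain ⟨L, _, _, _, ι, hι⟩ := exists_algHom_isAlgClosed_injective K
        (MvPolynomial (Fin 3) K)
      obtain ⟨x', y', z', u', v', h0, h1, h2, h3⟩ :=
        exists_point (ι (X 0)) (ι (X 1)) (ι (X 2))
          ((map_ne_zero_iff ι hι).2 (X_ne_zero 1))
      let ρ : R →ₐ[K] L := AlgHom.liftOfSurjective g hg (aeval ![x', y', z']) (by
        change RingHom.ker g ≤ _
        rw [hker, Ideal.span_singleton_le_iff_mem]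
        change aeval ![x', y', z'] _ = 0
        simpa using h0)
      have ρx : ρ x = x' := by rw [hx, AlgHom.liftOfSurjective_apply]; simp
      have ρy : ρ y = y' := by rw [hy, AlgHom.liftOfSurjective_apply]; simp
      let ψ : R ⊗[K] MvPolynomial (Fin 2) K →ₐ[K] L :=
        Algebra.TensorProduct.productMap ρ (aeval ![u', v'])
      have hcomp : (ψ.comp T.val).comp φ = ι := by
        ext i
        fin_cases i
        · change ψ (φ (X 0) : T) = ι (X 0)
          rw [φ0, hXU, ← h1]
          simp [ψ, ρx]
        · change ψ (φ (X 1) : T) = ι (X 1)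
          rw [φ1, hYV, ← h2]
          simp [ψ, ρy]
        · change ψ (φ (X 2) : T) = ι (X 2)
          rw [φ2, AddSubgroupClass.coe_sub, hXV, hYU, ← h3]
          simp [ψ, ρx, ρy]
      apply Function.Injective.of_comp (f := ψ.comp T.val)
      rw [← AlgHom.coe_comp, hcomp]
      exact hι
    rw [ringKrullDim_eq_of_isIntegral_of_injective (B := T) _ hint hinj,
      MvPolynomial.ringKrullDim_of_isNoetherianRing, ringKrullDim_eq_zero_of_field]
    simp
  · exact span_entries_le_radical (C := T) hU hV hXY
  · exact mul_mem_colon_of_rel (C := T) hrel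
end
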